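/- Let 1 ≤ p ≤ ∞, let α be a multi-index on ℝⁿ, and let s > |α| be real. Then there exists a constant C > 0 such that ‖∂^α φ‖_p ≤ C ‖J_{−s} φ‖_p for all φ ∈ 𝒮(ℝⁿ). -/

import Mathlib

open MeasureTheory Complex
open scoped FourierTransform ENNReal SchwartzMap

/-- The Bessel potential `J_z f = 𝓕⁻¹((1+|ξ|²)^(-z/2) · 𝓕 f)` of a function on `ℝⁿ`. -/
noncomputable def besselPotential (n : ℕ) (z : ℂ)
    (f : EuclideanSpace ℝ (Fin n) → ℂ) : EuclideanSpace ℝ (Fin n) → ℂ :=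
  𝓕⁻ (fun ξ => ((1 : ℂ) + (‖ξ‖ : ℂ) ^ 2) ^ (-z / 2) * 𝓕 f ξ)

/-- The partial derivative in the `j`-th coordinate direction. -/
noncomputable def pderivFun (n : ℕ) (j : Fin n)
    (f : EuclideanSpace ℝ (Fin n) → ℂ) : EuclideanSpace ℝ (Fin n) → ℂ :=
  fun x => fderiv ℝ f x (EuclideanSpace.single j (1 : ℝ))

/-- The iterated partial derivative `∂^α` associated to a multi-index `α`. -/
noncomputable def multiDeriv (n : ℕ) (α : Fin n → ℕ)
    (f : EuclideanSpace ℝ (Fin n) → ℂ) : EuclideanSpace ℝ (Fin n) → ℂ :=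
  (List.finRange n).foldr (fun j g => (pderivFun n j)^[α j] g) f

/-!
With `m` the symbol of `∂^α`, the function `m(ξ) (1 + |ξ|²)^(-z/2)` is, by Euler's integral for `Γ`,
a superposition over `t > 0` of the dilates `ξ ↦ G(√t ξ)` of the Schwartz function
`G(ξ) = m(ξ) exp (-|ξ|²)`, with weight a multiple of `t^((z - |α|)/2 - 1) exp (-t)`. Dilating a
Fourier transform does not change the `L¹` norm of the kernel, and the weight is integrable
because `Re z > |α|`; hence the superposition is the Fourier transform of some `K ∈ L¹`. Then
`∂^α φ = K ⋆ J_{-z} φ`, and Young's inequality applies.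
-/

open scoped Convolution

section Minkowski

variable {X Ω : Type*} [MeasurableSpace X] [MeasurableSpace Ω] {μ : Measure X} {ν : Measure Ω}

theorem lintegral_rpow_le_rpow_measure_univ_mul {f : Ω → ℝ≥0∞} (hf : AEMeasurable f ν) {r : ℝ}
    (hr : 1 ≤ r) : (∫⁻ ω, f ω ∂ν) ^ r ≤ ν Set.univ ^ (r - 1) * ∫⁻ ω, f ω ^ r ∂ν := by
  have hr₀ : 0 < r := zero_lt_one.trans_le hr
  have hle := eLpNorm'_le_eLpNorm'_mul_rpow_measure_univ zero_lt_one hr hf.aestronglyMeasurable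
  simp only [eLpNorm', enorm_eq_self, ENNReal.rpow_one, div_one] at hle
  refine (ENNReal.rpow_le_rpow hle hr₀.le).trans_eq ?_
  rw [ENNReal.mul_rpow_of_nonneg _ _ hr₀.le, ← ENNReal.rpow_mul, ← ENNReal.rpow_mul, mul_comm,
    one_div_mul_cancel hr₀.ne', ENNReal.rpow_one, sub_mul, one_mul, one_div_mul_cancel hr₀.ne']

variable [SFinite μ] [SFinite ν] {f : X → Ω → ℝ≥0∞} {A : ℝ≥0∞}

theorem eLpNormEssSup_lintegral_le (hf : Measurable (Function.uncurry f))
    (hA : ∀ᵐ ω ∂ν, eLpNormEssSup (f · ω) μ ≤ A) :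
    eLpNormEssSup (fun x => ∫⁻ ω, f x ω ∂ν) μ ≤ ν Set.univ * A := by
  have hae : ∀ᵐ x ∂μ, ∀ᵐ ω ∂ν, f x ω ≤ A := by
    refine (Measure.ae_ae_comm (p := fun x ω => f x ω ≤ A)
      (measurableSet_le hf measurable_const)).2 ?_
    filter_upwards [hA] with ω hω
    filter_upwards [enorm_ae_le_eLpNormEssSup (f · ω) μ] with x hx using hx.trans hω
  refine eLpNormEssSup_le_of_ae_enorm_bound ?_
  filter_upwards [hae] with x hx
  calc ∫⁻ ω, f x ω ∂ν ≤ ∫⁻ _, A ∂ν := lintegral_mono_ae hx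
    _ = ν Set.univ * A := by rw [lintegral_const, mul_comm]

theorem lintegral_rpow_lintegral_le (hf : Measurable (Function.uncurry f)) {r : ℝ} (hr : 1 ≤ r)
    (hA : ∀ᵐ ω ∂ν, ∫⁻ x, f x ω ^ r ∂μ ≤ A ^ r) :
    ∫⁻ x, (∫⁻ ω, f x ω ∂ν) ^ r ∂μ ≤ (ν Set.univ * A) ^ r := by
  have hfr : Measurable (Function.uncurry fun x ω => f x ω ^ r) := hf.pow_const r
  calc ∫⁻ x, (∫⁻ ω, f x ω ∂ν) ^ r ∂μ
      ≤ ∫⁻ x, ν Set.univ ^ (r - 1) * ∫⁻ ω, f x ω ^ r ∂ν ∂μ := lintegral_mono fun x =>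
        lintegral_rpow_le_rpow_measure_univ_mul hf.of_uncurry_left.aemeasurable hr
    _ = ν Set.univ ^ (r - 1) * ∫⁻ ω, ∫⁻ x, f x ω ^ r ∂μ ∂ν := by
        rw [lintegral_const_mul _ hfr.lintegral_prod_right, lintegral_lintegral_swap
          hfr.aemeasurable]
    _ ≤ ν Set.univ ^ (r - 1) * ∫⁻ _, A ^ r ∂ν := mul_le_mul_right (lintegral_mono_ae hA) _
    _ = (ν Set.univ * A) ^ r := by
        rw [lintegral_const, ENNReal.mul_rpow_of_nonneg _ _ (by linarith), mul_left_comm, mul_comm]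
        congr 1
        conv_lhs => rw [← ENNReal.rpow_one (ν Set.univ), ← ENNReal.rpow_mul, one_mul,
          ← ENNReal.rpow_add_of_nonneg _ _ (sub_nonneg.2 hr) zero_le_one, sub_add_cancel]

theorem eLpNorm_lintegral_le (hf : Measurable (Function.uncurry f)) {p : ℝ≥0∞} (hp : 1 ≤ p)
    (hA : ∀ᵐ ω ∂ν, eLpNorm (f · ω) p μ ≤ A) :
    eLpNorm (fun x => ∫⁻ ω, f x ω ∂ν) p μ ≤ ν Set.univ * A := by
  obtain rfl | hp_top := eq_or_ne p ∞
  · simp only [eLpNorm_exponent_top] at hA ⊢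
    exact eLpNormEssSup_lintegral_le hf hA
  have hr : 1 ≤ p.toReal := by simpa using ENNReal.toReal_mono hp_top hp
  have hr₀ : 0 < p.toReal := zero_lt_one.trans_le hr
  have hp₀ : p ≠ 0 := (zero_lt_one.trans_le hp).ne'
  simp only [eLpNorm_eq_lintegral_rpow_enorm_toReal hp₀ hp_top, enorm_eq_self, one_div,
    ENNReal.rpow_inv_le_iff hr₀] at hA ⊢
  exact lintegral_rpow_lintegral_le hf hr hA

end Minkowski

section Young

variable {𝕜 G E E' F : Type*} [NontriviallyNormedField 𝕜] [AddCommGroup G] [MeasurableSpace G]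
  [MeasurableAdd₂ G] [MeasurableNeg G] {μ : Measure G} [SFinite μ] [μ.IsAddRightInvariant]
  [NormedAddCommGroup E] [NormedSpace 𝕜 E] [NormedAddCommGroup E'] [NormedSpace 𝕜 E']
  [NormedAddCommGroup F] [NormedSpace 𝕜 F] [NormedSpace ℝ F]

theorem eLpNorm_lintegral_enorm_mul_enorm_sub_le {f : G → E} (hf : AEStronglyMeasurable f μ)
    {g : G → E'} (hg : StronglyMeasurable g) {p : ℝ≥0∞} (hp : 1 ≤ p) :
    eLpNorm (fun x => ∫⁻ t, ‖f t‖ₑ * ‖g (x - t)‖ₑ ∂μ) p μ ≤ eLpNorm f 1 μ * eLpNorm g p μ := by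
  have hmeas : Measurable (Function.uncurry fun x t : G => ‖g (x - t)‖ₑ) :=
    hg.enorm.comp measurable_sub
  have hle := eLpNorm_lintegral_le (μ := μ) (ν := μ.withDensity fun t => ‖f t‖ₑ) hmeas hp
    (A := eLpNorm g p μ) (ae_of_all _ fun t => ?_)
  · rw [withDensity_apply _ MeasurableSet.univ, Measure.restrict_univ] at hle
    rw [eLpNorm_one_eq_lintegral_enorm]
    convert hle using 3 with x
    exact (lintegral_withDensity_eq_lintegral_mul₀ hf.enorm
      hmeas.of_uncurry_left.aemeasurable).symm
  · rw [eLpNorm_enorm (fun x => g (x - t))]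
    exact (eLpNorm_comp_measurePreserving hg.aestronglyMeasurable
      (measurePreserving_sub_right μ t)).le

theorem eLpNorm_convolution_le (L : E →L[𝕜] E' →L[𝕜] F) {f : G → E}
    (hf : AEStronglyMeasurable f μ) {g : G → E'} (hg : AEStronglyMeasurable g μ) {p : ℝ≥0∞}
    (hp : 1 ≤ p) : eLpNorm (f ⋆[L, μ] g) p μ ≤ ‖L‖ₑ * (eLpNorm f 1 μ * eLpNorm g p μ) := by
  wlog hg' : StronglyMeasurable g
  · rw [convolution_congr L ae_eq_rfl hg.ae_eq_mk, eLpNorm_congr_ae hg.ae_eq_mk]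
    exact this L hf hg.stronglyMeasurable_mk.aestronglyMeasurable hp hg.stronglyMeasurable_mk
  have hle (x : G) : ‖(f ⋆[L, μ] g) x‖ₑ ≤ ‖L‖ₑ * ∫⁻ t, ‖f t‖ₑ * ‖g (x - t)‖ₑ ∂μ :=
    calc ‖(f ⋆[L, μ] g) x‖ₑ ≤ ∫⁻ t, ‖L (f t) (g (x - t))‖ₑ ∂μ :=
          enorm_integral_le_lintegral_enorm _
      _ ≤ ∫⁻ t, ‖L‖ₑ * (‖f t‖ₑ * ‖g (x - t)‖ₑ) ∂μ :=
          lintegral_mono fun t => (L.le_opENorm₂ _ _).trans_eq (mul_assoc _ _ _)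
      _ = ‖L‖ₑ * ∫⁻ t, ‖f t‖ₑ * ‖g (x - t)‖ₑ ∂μ := lintegral_const_mul' _ _ enorm_ne_top
  exact (eLpNorm_le_nnreal_smul_eLpNorm_of_ae_le_mul' (c := ‖L‖₊) (ae_of_all _ hle) p).trans
    (mul_le_mul_right (eLpNorm_lintegral_enorm_mul_enorm_sub_le hf hg' hp) _)

end Young

section Dilate

variable {V E : Type*} [NormedAddCommGroup V] [NormedSpace ℝ V] [NormedAddCommGroup E]
  [NormedSpace ℝ E]

/-- The `L¹`-normalised dilate `y ↦ |r|⁻ⁿ K(y / r)` of a function on an `n`-dimensional space, whose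
Fourier transform is `ξ ↦ 𝓕 K (r • ξ)`. -/
noncomputable def dilate (r : ℝ) (K : V → E) (y : V) : E :=
  |r ^ Module.finrank ℝ V|⁻¹ • K (r⁻¹ • y)

theorem norm_dilate (r : ℝ) (K : V → E) (y : V) : ‖dilate r K y‖ = dilate r (fun y => ‖K y‖) y := by
  simp [dilate, norm_smul]

variable [MeasurableSpace V] [BorelSpace V]

theorem stronglyMeasurable_dilate_comp [SecondCountableTopology V] {Ω : Type*}
    [MeasurableSpace Ω] {ρ : Ω → ℝ} (hρ : Measurable ρ) {K : V → E}
    (hK : StronglyMeasurable K) :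
    StronglyMeasurable fun q : Ω × V => dilate (ρ q.1) K q.2 :=
  .smul (Measurable.stronglyMeasurable (by fun_prop)) (hK.comp_measurable (by fun_prop))

variable [FiniteDimensional ℝ V] {μ : Measure V} [μ.IsAddHaarMeasure] {r : ℝ}

theorem integrable_dilate {K : V → E} (hK : Integrable K μ) (hr : r ≠ 0) :
    Integrable (dilate r K) μ :=
  (hK.comp_smul (inv_ne_zero hr)).smul _

theorem integral_dilate (K : V → E) (hr : r ≠ 0) : ∫ y, dilate r K y ∂μ = ∫ y, K y ∂μ := by
  simp only [dilate]
  rw [integral_smul, Measure.integral_comp_inv_smul, inv_smul_smul₀ (by positivity)]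

end Dilate

section Fourier

variable {V : Type*} [NormedAddCommGroup V] [InnerProductSpace ℝ V] [FiniteDimensional ℝ V]
  [MeasurableSpace V] [BorelSpace V] {E : Type*} [NormedAddCommGroup E] [NormedSpace ℂ E]

theorem integrable_circle_smul {X : Type*} [MeasurableSpace X] {μ : Measure X} {f : X → E}
    (hf : Integrable f μ) {c : X → Circle} (hc : AEStronglyMeasurable c μ) :
    Integrable (fun x => c x • f x) μ :=
  hf.mono (hc.smul hf.1) (ae_of_all _ fun x => by rw [Circle.norm_smul])

theorem continuous_fourierInv {F : V → E} (hF : Integrable F) : Continuous (𝓕⁻ F) := by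
  rw [Real.fourierInv_eq_fourier_comp_neg]
  exact VectorFourier.fourierIntegral_continuous Real.continuous_fourierChar
    (L := innerₗ V) continuous_inner hF.comp_neg

theorem fourier_integral {Ω : Type*} [MeasurableSpace Ω] {μ : Measure Ω} [SFinite μ]
    {k : Ω → V → E} (hk : Integrable (Function.uncurry k) (μ.prod volume)) (ξ : V) :
    𝓕 (fun y => ∫ ω, k ω y ∂μ) ξ = ∫ ω, 𝓕 (k ω) ξ ∂μ := by
  have hint : Integrable (fun q : Ω × V => Real.fourierChar (-inner ℝ q.2 ξ) • k q.1 q.2)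
      (μ.prod volume) := by
    have hchar : Continuous fun y : V => Real.fourierChar (-inner ℝ y ξ) := by fun_prop
    exact integrable_circle_smul hk hchar.aestronglyMeasurable.comp_snd
  simp only [Real.fourier_eq]
  rw [integral_integral_swap hint]
  simp only [Circle.smul_def, integral_smul]

theorem fourierInv_fourier_smul_eq_convolution [CompleteSpace E] {K : V → ℂ} (hK : Integrable K)
    {F : V → E} (hF : Integrable F) :
    𝓕⁻ (fun ξ => 𝓕 K ξ • F ξ) = K ⋆[ContinuousLinearMap.lsmul ℂ ℂ] 𝓕⁻ F := by
  ext x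
  have hint : Integrable
      (Function.uncurry fun y ξ : V => Real.fourierChar (-inner ℝ y ξ) • (K y • F ξ))
      (volume.prod volume) := by
    have hchar : Continuous fun q : V × V => Real.fourierChar (-inner ℝ q.1 q.2) := by fun_prop
    exact integrable_circle_smul (hK.smul_prod hF) hchar.aestronglyMeasurable
  calc 𝓕⁻ (fun ξ => 𝓕 K ξ • F ξ) x
      = 𝓕⁻ (fun ξ => ∫ y, Real.fourierChar (-inner ℝ y ξ) • (K y • F ξ)) x := by
        simp only [Real.fourier_eq K, ← integral_smul_const, smul_assoc]
    _ = ∫ y, 𝓕⁻ (fun ξ => Real.fourierChar (-inner ℝ y ξ) • (K y • F ξ)) x := by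
        simp only [Real.fourierInv_eq_fourier_neg]
        exact fourier_integral hint (-x)
    _ = ∫ y, K y • 𝓕⁻ F (x - y) := by
        congr 1 with y
        rw [Real.fourierInv_eq, Real.fourierInv_eq, ← integral_smul]
        congr 1 with ξ
        rw [smul_smul, ← AddChar.map_add_eq_mul, smul_comm, inner_sub_right,
          real_inner_comm ξ y, sub_eq_add_neg]

theorem fourier_dilate (K : V → E) {r : ℝ} (hr : r ≠ 0) (ξ : V) :
    𝓕 (dilate r K) ξ = 𝓕 K (r • ξ) := by
  rw [Real.fourier_eq, Real.fourier_eq,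
    ← integral_dilate (fun y => Real.fourierChar (-inner ℝ y (r • ξ)) • K y) hr]
  congr 1 with y
  simp only [dilate]
  rw [smul_comm, real_inner_smul_left, real_inner_smul_right, inv_mul_cancel_left₀ hr]

theorem exists_integrable_fourier_eq_integral_smul {Ω : Type*} [MeasurableSpace Ω]
    {μ : Measure Ω} [SFinite μ] {w : Ω → ℂ} (hw : Integrable w μ) {ρ : Ω → ℝ} (hρ : Measurable ρ)
    (hρ₀ : ∀ᵐ ω ∂μ, ρ ω ≠ 0) {K : V → E} (hK : Integrable K) :
    ∃ L : V → E, Integrable L ∧ ∀ ξ, 𝓕 L ξ = ∫ ω, w ω • 𝓕 K (ρ ω • ξ) ∂μ := by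
  wlog hKm : StronglyMeasurable K
  · simpa only [Real.fourier_congr_ae hK.1.ae_eq_mk] using
      this hw hρ hρ₀ (hK.congr hK.1.ae_eq_mk) hK.1.stronglyMeasurable_mk
  have hint : Integrable (fun q : Ω × V => w q.1 • dilate (ρ q.1) K q.2) (μ.prod volume) := by
    refine (integrable_prod_iff (hw.1.comp_fst.smul
      (stronglyMeasurable_dilate_comp hρ hKm).aestronglyMeasurable)).2 ⟨?_, ?_⟩
    · filter_upwards [hρ₀] with ω hω using (integrable_dilate hK hω).smul (w ω)
    · refine (hw.norm.mul_const (∫ y, ‖K y‖)).congr ?_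
      filter_upwards [hρ₀] with ω hω
      calc ‖w ω‖ * ∫ y, ‖K y‖ = ∫ y, ‖w ω‖ * dilate (ρ ω) (fun y => ‖K y‖) y := by
            rw [integral_const_mul, integral_dilate _ hω]
        _ = ∫ y, ‖w ω • dilate (ρ ω) K y‖ := by simp only [norm_smul, norm_dilate]
  refine ⟨fun y => ∫ ω, w ω • dilate (ρ ω) K y ∂μ, hint.integral_prod_right, fun ξ => ?_⟩
  rw [fourier_integral hint]
  refine integral_congr_ae ?_
  filter_upwards [hρ₀] with ω hω
  rw [← fourier_dilate K hω, Real.fourier_eq, Real.fourier_eq, ← integral_smul]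
  congr 1 with y
  exact smul_comm _ _ _

end Fourier

section Gaussian

theorem one_add_pow_mul_exp_neg_sq_le (k : ℕ) {t : ℝ} (ht : 0 ≤ t) :
    (1 + t) ^ k * Real.exp (-t ^ 2) ≤ k.factorial * Real.exp 2 := by
  have hpow : (1 + t) ^ k ≤ k.factorial * Real.exp (1 + t) :=
    (div_le_iff₀' (by positivity)).1 (Real.pow_div_factorial_le_exp _ (by positivity) k)
  calc (1 + t) ^ k * Real.exp (-t ^ 2)
      ≤ k.factorial * Real.exp (1 + t) * Real.exp (-t ^ 2) := by gcongr
    _ = k.factorial * Real.exp (1 + t - t ^ 2) := by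
        rw [mul_assoc, ← Real.exp_add, ← sub_eq_add_neg]
    _ ≤ k.factorial * Real.exp 2 := by gcongr; nlinarith [sq_nonneg (t - 1)]

variable {V : Type*} [NormedAddCommGroup V] [InnerProductSpace ℝ V]

theorem exists_norm_iteratedFDeriv_exp_neg_norm_sq_le (n : ℕ) : ∃ (C : ℝ) (k : ℕ), 0 ≤ C ∧
    ∀ x : V, ‖iteratedFDeriv ℝ n (fun x : V => Real.exp (-‖x‖ ^ 2)) x‖ ≤
      C * ((1 + ‖x‖) ^ k * Real.exp (-‖x‖ ^ 2)) := by
  obtain ⟨k, C, hC, hbound⟩ :=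
    (Function.hasTemperateGrowth_norm_sq V).norm_iteratedFDeriv_le_uniform n
  refine ⟨n.factorial * (1 + C) ^ n, k * n, by positivity, fun x => ?_⟩
  have houter (i : ℕ) : ‖iteratedFDeriv ℝ i (fun t : ℝ => Real.exp (-1 * t)) (‖x‖ ^ 2)‖ =
      Real.exp (-‖x‖ ^ 2) := by
    rw [norm_iteratedFDeriv_eq_norm_iteratedDeriv, iteratedDeriv_exp_const_mul]
    simp
  have hinner (i : ℕ) (hi : 1 ≤ i) (hin : i ≤ n) :
      ‖iteratedFDeriv ℝ i (fun x : V => ‖x‖ ^ 2) x‖ ≤ ((1 + C) * (1 + ‖x‖) ^ k) ^ i :=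
    calc _ ≤ C * (1 + ‖x‖) ^ k := hbound i hin x
      _ ≤ (1 + C) * (1 + ‖x‖) ^ k := by gcongr; linarith
      _ ≤ ((1 + C) * (1 + ‖x‖) ^ k) ^ i := le_self_pow₀
          (one_le_mul_of_one_le_of_one_le (by linarith) (one_le_pow₀ (by simp))) (by lia)
  have hcomp := norm_iteratedFDeriv_comp_le (g := fun t : ℝ => Real.exp (-1 * t)) (by fun_prop)
    (contDiff_norm_sq ℝ) le_rfl x (fun i _ => (houter i).le) hinner
  simp only [Function.comp_def, neg_one_mul] at hcomp
  refine hcomp.trans_eq ?_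
  rw [mul_pow, ← pow_mul]
  ring

/-- The Gaussian `x ↦ exp (-‖x‖²)` as a Schwartz function. -/
noncomputable def gaussianSchwartzMap (V : Type*) [NormedAddCommGroup V] [InnerProductSpace ℝ V] :
    𝓢(V, ℝ) where
  toFun x := Real.exp (-‖x‖ ^ 2)
  smooth' := (contDiff_norm_sq ℝ).neg.exp
  decay' k n := by
    obtain ⟨C, l, hC, hbound⟩ := exists_norm_iteratedFDeriv_exp_neg_norm_sq_le (V := V) n
    refine ⟨C * ((k + l).factorial * Real.exp 2), fun x => ?_⟩
    calc ‖x‖ ^ k * _ ≤ (1 + ‖x‖) ^ k * (C * ((1 + ‖x‖) ^ l * Real.exp (-‖x‖ ^ 2))) := by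
          gcongr
          · linarith
          · exact hbound x
      _ = C * ((1 + ‖x‖) ^ (k + l) * Real.exp (-‖x‖ ^ 2)) := by ring
      _ ≤ C * ((k + l).factorial * Real.exp 2) :=
          mul_le_mul_of_nonneg_left (one_add_pow_mul_exp_neg_sq_le _ (norm_nonneg x)) hC

theorem gaussianSchwartzMap_apply (x : V) : gaussianSchwartzMap V x = Real.exp (-‖x‖ ^ 2) := rfl

end Gaussian

section Kernel

variable {V : Type*} [NormedAddCommGroup V] [InnerProductSpace ℝ V] [FiniteDimensional ℝ V]
  [MeasurableSpace V] [BorelSpace V]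

theorem exists_integrable_fourier_eq_mul_exp_neg_norm_sq {m : V → ℂ}
    (hm : m.HasTemperateGrowth) :
    ∃ K : V → ℂ, Integrable K ∧ ∀ ξ, 𝓕 K ξ = m ξ * (Real.exp (-‖ξ‖ ^ 2) : ℝ) := by
  let ψ : 𝓢(V, ℂ) :=
    SchwartzMap.bilinLeftCLM (ContinuousLinearMap.lsmul ℝ ℝ) hm (gaussianSchwartzMap V)
  refine ⟨(𝓕⁻ ψ : 𝓢(V, ℂ)), SchwartzMap.integrable _, fun ξ => ?_⟩
  rw [← SchwartzMap.fourier_coe, FourierTransform.fourier_fourierInv_eq]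
  simp [ψ, gaussianSchwartzMap_apply, mul_comm]

theorem inv_Gamma_mul_integral_cpow_mul_exp_neg_mul_Ioi {a : ℂ} (ha : 0 < a.re) {b : ℝ}
    (hb : 0 < b) :
    (Gamma a)⁻¹ * ∫ t : ℝ in Set.Ioi 0, (t : ℂ) ^ (a - 1) * cexp (-(b * t)) = (b : ℂ) ^ (-a) := by
  have harg : (b : ℂ).arg ≠ Real.pi := by
    simpa [arg_ofReal_of_nonneg hb.le] using Real.pi_ne_zero.symm
  rw [integral_cpow_mul_exp_neg_mul_Ioi ha hb, mul_comm,
    mul_inv_cancel_right₀ (Gamma_ne_zero_of_re_pos ha), one_div, inv_cpow _ _ harg, cpow_neg]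

theorem cpow_mul_exp_neg_mul_one_add_sq_mul (a : ℂ) (d : ℕ) (x : ℝ) {t : ℝ} (ht : 0 < t) :
    (t : ℂ) ^ a * cexp (-((1 + x ^ 2 : ℝ) * t)) =
      Real.exp (-t) * (t : ℂ) ^ (a - d / 2) * (√t ^ d * Real.exp (-(√t * x) ^ 2)) := by
  have hpow : (t : ℂ) ^ a = (t : ℂ) ^ (a - d / 2) * √t ^ d := by
    rw [Real.sqrt_eq_rpow, ofReal_cpow ht.le, ← cpow_mul_nat,
      ← cpow_add _ _ (by exact_mod_cast ht.ne')]
    congr 1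
    push_cast
    ring
  have hexp : cexp (-((1 + x ^ 2 : ℝ) * t)) = Real.exp (-t) * Real.exp (-(√t * x) ^ 2) := by
    rw [mul_pow, Real.sq_sqrt ht.le, ofReal_exp, ofReal_exp, ← Complex.exp_add]
    push_cast
    ring_nf
  rw [hpow, hexp]
  ring

theorem exists_integrable_fourier_eq_mul_one_add_norm_sq_cpow {m : V → ℂ}
    (hm : m.HasTemperateGrowth) {d : ℕ} (hmd : ∀ (r : ℝ) ξ, m (r • ξ) = r ^ d * m ξ) {z : ℂ}
    (hz : d < z.re) :
    ∃ K : V → ℂ, Integrable K ∧ ∀ ξ, 𝓕 K ξ = m ξ * (1 + (‖ξ‖ : ℂ) ^ 2) ^ (-z / 2) := by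
  have hz₀ : 0 < z.re := d.cast_nonneg.trans_lt hz
  obtain ⟨K, hK, hKm⟩ := exists_integrable_fourier_eq_mul_exp_neg_norm_sq hm
  have hweight : Integrable
      (fun t : ℝ => (Gamma (z / 2))⁻¹ * (Real.exp (-t) * (t : ℂ) ^ ((z - d) / 2 - 1)))
      (volume.restrict (Set.Ioi 0)) :=
    (GammaIntegral_convergent (by simpa using hz)).const_mul _
  obtain ⟨L, hL, hLK⟩ := exists_integrable_fourier_eq_integral_smul hweight
    Real.continuous_sqrt.measurable
    (ae_restrict_of_forall_mem measurableSet_Ioi fun t ht => (Real.sqrt_pos.2 ht).ne') hK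
  refine ⟨L, hL, fun ξ => ?_⟩
  have hintegrand : ∀ t ∈ Set.Ioi (0 : ℝ),
      ((Gamma (z / 2))⁻¹ * (Real.exp (-t) * (t : ℂ) ^ ((z - d) / 2 - 1))) • 𝓕 K (√t • ξ) =
        m ξ * (Gamma (z / 2))⁻¹ * (t ^ (z / 2 - 1) * cexp (-((1 + ‖ξ‖ ^ 2 : ℝ) * t))) := by
    intro t (ht : 0 < t)
    rw [hKm, hmd, norm_smul, Real.norm_of_nonneg t.sqrt_nonneg,
      cpow_mul_exp_neg_mul_one_add_sq_mul _ d _ ht, sub_div, sub_right_comm, smul_eq_mul]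
    ring
  rw [hLK, setIntegral_congr_fun measurableSet_Ioi hintegrand, integral_const_mul, mul_assoc,
    inv_Gamma_mul_integral_cpow_mul_exp_neg_mul_Ioi (by simpa using hz₀) (by positivity), neg_div]
  push_cast
  rfl

end Kernel

section MultiDeriv

variable {n : ℕ}

theorem coe_iterate_lineDerivOp (j : Fin n) (k : ℕ) (φ : 𝓢(EuclideanSpace ℝ (Fin n), ℂ)) :
    (LineDeriv.lineDerivOp (EuclideanSpace.single j (1 : ℝ)))^[k] φ = (pderivFun n j)^[k] φ :=
  Function.Semiconj.iterate_right (f := fun ψ : 𝓢(EuclideanSpace ℝ (Fin n), ℂ) => ⇑ψ)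
    (fun _ => rfl) k φ

/-- The derivative `∂^α` as an operation on Schwartz functions. -/
noncomputable def schwartzMultiDeriv (α : Fin n → ℕ) (φ : 𝓢(EuclideanSpace ℝ (Fin n), ℂ)) :
    𝓢(EuclideanSpace ℝ (Fin n), ℂ) :=
  (List.finRange n).foldr
    (fun j ψ => (LineDeriv.lineDerivOp (EuclideanSpace.single j (1 : ℝ)))^[α j] ψ) φ

theorem coe_schwartzMultiDeriv (α : Fin n → ℕ) (φ : 𝓢(EuclideanSpace ℝ (Fin n), ℂ)) :
    ⇑(schwartzMultiDeriv α φ) = multiDeriv n α φ :=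
  (List.foldr_hom (fun ψ : 𝓢(EuclideanSpace ℝ (Fin n), ℂ) => ⇑ψ) fun j ψ =>
    (coe_iterate_lineDerivOp j (α j) ψ).symm).symm

/-- The symbol `ξ ↦ ∏ j, (2πi ξ_j) ^ α_j` of the differential operator `∂^α`. -/
noncomputable def multiDerivSymbol (α : Fin n → ℕ) (ξ : EuclideanSpace ℝ (Fin n)) : ℂ :=
  ∏ j, (2 * Real.pi * I * ξ j) ^ α j

theorem hasTemperateGrowth_multiDerivSymbol (α : Fin n → ℕ) :
    (multiDerivSymbol α).HasTemperateGrowth := by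
  have hcoord (j : Fin n) :
      Function.HasTemperateGrowth fun ξ : EuclideanSpace ℝ (Fin n) => ξ j :=
    (EuclideanSpace.proj j : EuclideanSpace ℝ (Fin n) →L[ℝ] ℝ).hasTemperateGrowth
  have hprod : multiDerivSymbol α =
      ∏ j, fun ξ : EuclideanSpace ℝ (Fin n) => (2 * Real.pi * I * ξ j) ^ α j := by
    ext ξ
    simp only [multiDerivSymbol, Finset.prod_apply]
  rw [hprod]
  exact Finset.prod_induction _ Function.HasTemperateGrowth (fun _ _ => .mul) (.const 1)
    fun j _ => by fun_prop

theorem multiDerivSymbol_smul (α : Fin n → ℕ) (r : ℝ) (ξ : EuclideanSpace ℝ (Fin n)) :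
    multiDerivSymbol α (r • ξ) = (r : ℂ) ^ (∑ j, α j) * multiDerivSymbol α ξ := by
  simp only [multiDerivSymbol, ← Finset.prod_pow_eq_pow_sum, ← Finset.prod_mul_distrib, ← mul_pow,
    PiLp.smul_apply, smul_eq_mul, ofReal_mul, mul_left_comm (r : ℂ)]

theorem fourier_iterate_lineDerivOp (j : Fin n) (k : ℕ) (φ : 𝓢(EuclideanSpace ℝ (Fin n), ℂ))
    (ξ : EuclideanSpace ℝ (Fin n)) :
    𝓕 ((LineDeriv.lineDerivOp (EuclideanSpace.single j (1 : ℝ)))^[k] φ) ξ =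
      (2 * Real.pi * I * ξ j) ^ k * 𝓕 φ ξ := by
  induction k with
  | zero => simp
  | succ k ih =>
    rw [Function.iterate_succ_apply', SchwartzMap.fourier_lineDerivOp_eq, smul_apply,
      SchwartzMap.smulLeftCLM_apply_apply (by fun_prop), ih, EuclideanSpace.inner_single_right,
      conj_trivial, one_mul, real_smul, smul_eq_mul]
    ring

theorem fourier_schwartzMultiDeriv (α : Fin n → ℕ) (φ : 𝓢(EuclideanSpace ℝ (Fin n), ℂ))
    (ξ : EuclideanSpace ℝ (Fin n)) :
    𝓕 (schwartzMultiDeriv α φ) ξ = multiDerivSymbol α ξ * 𝓕 φ ξ := by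
  rw [schwartzMultiDeriv, multiDerivSymbol, Fin.prod_univ_def]
  induction List.finRange n with
  | nil => simp
  | cons j l ih =>
    rw [List.foldr_cons, fourier_iterate_lineDerivOp, ih, List.map_cons, List.prod_cons]
    ring

end MultiDeriv

section BesselPotential

theorem integrable_one_add_norm_sq_cpow_mul {V : Type*} [NormedAddCommGroup V]
    [InnerProductSpace ℝ V] [FiniteDimensional ℝ V] [MeasurableSpace V] [BorelSpace V] (w : ℂ)
    (ψ : 𝓢(V, ℂ)) : Integrable fun ξ => (1 + (‖ξ‖ : ℂ) ^ 2) ^ w * ψ ξ := by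
  have hcont : Continuous fun ξ : V => (1 + (‖ξ‖ : ℂ) ^ 2) ^ w :=
    .cpow (by fun_prop) continuous_const fun ξ => by
      exact_mod_cast ofReal_mem_slitPlane.2 (by positivity : 0 < 1 + ‖ξ‖ ^ 2)
  refine (SchwartzMap.smulLeftCLM ℂ (fun ξ : V => (1 + ‖ξ‖ ^ 2) ^ w.re) ψ).integrable.mono
    (hcont.mul ψ.continuous).aestronglyMeasurable (ae_of_all _ fun ξ => le_of_eq ?_)
  rw [SchwartzMap.smulLeftCLM_apply_apply (by fun_prop), norm_mul, norm_smul,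
    Real.norm_of_nonneg (by positivity), ← norm_cpow_eq_rpow_re_of_pos (by positivity)]
  push_cast
  rfl

variable {n : ℕ}

theorem continuous_besselPotential (z : ℂ) (φ : 𝓢(EuclideanSpace ℝ (Fin n), ℂ)) :
    Continuous (besselPotential n z φ) :=
  continuous_fourierInv (integrable_one_add_norm_sq_cpow_mul _ (𝓕 φ))

theorem multiDeriv_eq_convolution_besselPotential {α : Fin n → ℕ} {z : ℂ}
    {K : EuclideanSpace ℝ (Fin n) → ℂ} (hK : Integrable K)
    (hKα : ∀ ξ, 𝓕 K ξ = multiDerivSymbol α ξ * (1 + (‖ξ‖ : ℂ) ^ 2) ^ (-z / 2))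
    (φ : 𝓢(EuclideanSpace ℝ (Fin n), ℂ)) :
    multiDeriv n α φ = K ⋆[ContinuousLinearMap.lsmul ℂ ℂ] besselPotential n (-z) φ := by
  have hcancel (ξ : EuclideanSpace ℝ (Fin n)) :
      (1 + (‖ξ‖ : ℂ) ^ 2) ^ (-z / 2) * (1 + (‖ξ‖ : ℂ) ^ 2) ^ (-(-z) / 2) = 1 := by
    have hbase : 1 + (‖ξ‖ : ℂ) ^ 2 ≠ 0 := by exact_mod_cast (by positivity : 1 + ‖ξ‖ ^ 2 ≠ 0)
    rw [← cpow_add _ _ hbase, neg_neg, neg_div, neg_add_cancel, cpow_zero]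
  rw [besselPotential, ← SchwartzMap.fourier_coe, ← fourierInv_fourier_smul_eq_convolution hK
    (integrable_one_add_norm_sq_cpow_mul _ (𝓕 φ)), ← coe_schwartzMultiDeriv,
    ← FourierTransform.fourierInv_fourier_eq (F := 𝓢(EuclideanSpace ℝ (Fin n), ℂ))
      (schwartzMultiDeriv α φ), SchwartzMap.fourierInv_coe]
  congr 1 with ξ
  rw [fourier_schwartzMultiDeriv, hKα, smul_eq_mul, mul_assoc, ← mul_assoc (_ ^ _), hcancel,
    one_mul]

theorem multiDeriv_le_besselPotential_general (n : ℕ) (α : Fin n → ℕ) (z : ℂ)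
    (hz : (∑ j, α j : ℝ) < z.re) :
    ∃ C : ℝ, 0 < C ∧ ∀ p : ℝ≥0∞, 1 ≤ p → ∀ φ : 𝓢(EuclideanSpace ℝ (Fin n), ℂ),
      eLpNorm (multiDeriv n α ⇑φ) p volume ≤
        ENNReal.ofReal C * eLpNorm (besselPotential n (-z) ⇑φ) p volume := by
  obtain ⟨K, hK, hKα⟩ := exists_integrable_fourier_eq_mul_one_add_norm_sq_cpow
    (hasTemperateGrowth_multiDerivSymbol α) (multiDerivSymbol_smul α) (z := z)
    (by exact_mod_cast hz)
  refine ⟨(eLpNorm K 1 volume).toReal + 1, by positivity, fun p hp φ => ?_⟩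
  have hC : eLpNorm K 1 volume ≤ ENNReal.ofReal ((eLpNorm K 1 volume).toReal + 1) :=
    (ENNReal.le_ofReal_iff_toReal_le (memLp_one_iff_integrable.2 hK).2.ne (by positivity)).2
      (by simp)
  calc eLpNorm (multiDeriv n α φ) p volume
      = eLpNorm (K ⋆[ContinuousLinearMap.lsmul ℂ ℂ] besselPotential n (-z) φ) p volume := by
        rw [multiDeriv_eq_convolution_besselPotential hK hKα]
    _ ≤ ‖(ContinuousLinearMap.lsmul ℂ ℂ : ℂ →L[ℂ] ℂ →L[ℂ] ℂ)‖ₑ *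
          (eLpNorm K 1 volume * eLpNorm (besselPotential n (-z) φ) p volume) :=
        eLpNorm_convolution_le _ hK.1 (continuous_besselPotential _ φ).aestronglyMeasurable hp
    _ ≤ 1 * (ENNReal.ofReal ((eLpNorm K 1 volume).toReal + 1) * _) := by
        gcongr
        exact ContinuousLinearMap.opENorm_lsmul_le
    _ = _ := one_mul _

end BesselPotential

/-- For `1 ≤ p ≤ ∞`, a multi-index `α` and real `s > |α|`, one has
`‖∂^α φ‖_p ≤ C ‖J_{-s} φ‖_p` for all Schwartz `φ`. -/
theorem multiDeriv_le_besselPotential (n : ℕ) (p : ℝ≥0∞) (hp : 1 ≤ p)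
    (α : Fin n → ℕ) (s : ℝ) (hs : (∑ j, α j : ℝ) < s) :
    ∃ C : ℝ, 0 < C ∧ ∀ φ : 𝓢(EuclideanSpace ℝ (Fin n), ℂ),
      eLpNorm (multiDeriv n α ⇑φ) p volume ≤
        ENNReal.ofReal C * eLpNorm (besselPotential n (-(s : ℂ)) ⇑φ) p volume :=
  (multiDeriv_le_besselPotential_general n α s hs).imp fun _ hC => ⟨hC.1, hC.2 p hp⟩
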